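/- Suppose s₀ > 0 satisfies the free boundary condition tanh(φ(s₀)) = B(s₀)·K/(a·sinh(2s₀)). Then B(s₀)² > K², and with r := arcosh(A(s₀)·cosh(φ(s₀))) (so r > 0) one has sinh(r)² = B(s₀)⁴/(B(s₀)² − K²) and coth(r) = a·sinh(2s₀)/B(s₀)² = B'(s₀)/B(s₀). -/

import Mathlib

namespace MoriCatenoid

/-- Profile function `B(s) = √(a·cosh(2s) − 1/2)` of the Mori family. -/
noncomputable def B (a s : ℝ) : ℝ := Real.sqrt (a * Real.cosh (2 * s) - 1 / 2)

/-- Profile function `A(s) = √(a·cosh(2s) + 1/2)` of the Mori family. -/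
noncomputable def A (a s : ℝ) : ℝ := Real.sqrt (a * Real.cosh (2 * s) + 1 / 2)

/-- The constant `K = √(a² − 1/4)`. -/
noncomputable def K (a : ℝ) : ℝ := Real.sqrt (a ^ 2 - 1 / 4)

/-- The angle function `φ(s) = K·∫₀ˢ dt/(A(t)²·B(t))`. -/
noncomputable def φ (a s : ℝ) : ℝ := K a * ∫ t in (0:ℝ)..s, 1 / ((A a t) ^ 2 * B a t)

/-- The mode-one Jacobi field `f_*(s) = d/ds (A(s)·cosh(φ(s)))`. -/
noncomputable def fstar (a s : ℝ) : ℝ := deriv (fun t => A a t * Real.cosh (φ a t)) s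

/-- Squared norm of the second fundamental form, `|II|²(s) = 2·(B''(s)/B(s) − 1)`. -/
noncomputable def IIsq (a s : ℝ) : ℝ := 2 * (deriv (deriv (B a)) s / B a s - 1)

/-- The mode-`k` potential `W_k(s) = |II|²(s) − 2 − k²/B(s)²`. -/
noncomputable def W (a : ℝ) (k : ℤ) (s : ℝ) : ℝ := IIsq a s - 2 - (k : ℝ) ^ 2 / (B a s) ^ 2

/-- Inverse hyperbolic cosine: `arcosh x = log (x + √(x² − 1))`. -/
noncomputable def arcosh (x : ℝ) : ℝ := Real.log (x + Real.sqrt (x ^ 2 - 1))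

/-- The axial boost field `u_*(s) = −a·sinh(2s)/B(s)`. -/
noncomputable def ustar (a s : ℝ) : ℝ := -a * Real.sinh (2 * s) / B a s

/-- The radial quadratic form of mode `k`:
`S_k(u) = ∫_{−s₀}^{s₀} (B·u'² − B·W_k·u²) − coth(r)·B(s₀)·(u(s₀)² + u(−s₀)²)`,
where `u'` is the derivative of `u` within `[−s₀, s₀]`. -/
noncomputable def Sk (a s₀ r : ℝ) (k : ℤ) (u : ℝ → ℝ) : ℝ :=
  (∫ s in (-s₀)..s₀,
      (B a s * (derivWithin u (Set.Icc (-s₀) s₀) s) ^ 2 - B a s * W a k s * u s ^ 2))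
    - Real.cosh r / Real.sinh r * B a s₀ * (u s₀ ^ 2 + u (-s₀) ^ 2)

/-!
The profile functions satisfy `A² = B² + 1` and `(a·sinh 2s)² = A²B² − K²`. If `tanh θ = p / q`,
then `cosh²θ · (q² − p²) = q²`; for `p = B·K` and `q = a·sinh 2s` one has
`q² − p² = A²B² − (1 + B²)K² = A²(B² − K²)`. Hence the free boundary condition says
`(A·cosh θ)² · (B² − K²) = (a·sinh 2s)²`, which forces `B² > K²`. Since `A·cosh θ = cosh r`, this
determines `cosh² r`, then `sinh² r = cosh² r − 1`, and finally their quotient, in which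
`a·sinh 2s = B·B'`.
-/

variable {a s θ r x p q : ℝ}

lemma le_mul_cosh (ha : 0 ≤ a) (x : ℝ) : a ≤ a * Real.cosh x :=
  le_mul_of_one_le_right ha (Real.one_le_cosh x)

lemma mul_sinh_two_mul_ne_zero (ha : a ≠ 0) (hs : s ≠ 0) : a * Real.sinh (2 * s) ≠ 0 :=
  mul_ne_zero ha (Real.sinh_ne_zero.mpr (mul_ne_zero two_ne_zero hs))

lemma cosh_sq_mul_sq_sub_sq_of_tanh_eq_div (hq : q ≠ 0) (h : Real.tanh θ = p / q) :
    Real.cosh θ ^ 2 * (q ^ 2 - p ^ 2) = q ^ 2 := by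
  have hsinh : Real.sinh θ * q = p * Real.cosh θ := by
    rwa [Real.tanh_eq_sinh_div_cosh, div_eq_div_iff (Real.cosh_pos θ).ne' hq] at h
  linear_combination
    q ^ 2 * Real.cosh_sq_sub_sinh_sq θ + (Real.sinh θ * q + p * Real.cosh θ) * hsinh

lemma cosh_arcosh (hx : 1 ≤ x) : Real.cosh (arcosh x) = x :=
  Real.cosh_arcosh hx

lemma arcosh_pos (hx : 1 < x) : 0 < arcosh x :=
  Real.arcosh_pos hx

lemma A_sq (ha : 0 ≤ a) (s : ℝ) : A a s ^ 2 = a * Real.cosh (2 * s) + 1 / 2 :=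
  Real.sq_sqrt (by linarith [le_mul_cosh ha (2 * s)])

lemma B_sq (ha : 1 / 2 ≤ a) (s : ℝ) : B a s ^ 2 = a * Real.cosh (2 * s) - 1 / 2 :=
  Real.sq_sqrt (by linarith [le_mul_cosh (a := a) (by linarith) (2 * s)])

lemma K_sq (ha : 1 / 2 ≤ a) : K a ^ 2 = a ^ 2 - 1 / 4 :=
  Real.sq_sqrt (by nlinarith)

lemma A_sq_eq_B_sq_add_one (ha : 1 / 2 ≤ a) (s : ℝ) : A a s ^ 2 = B a s ^ 2 + 1 := by
  rw [A_sq (by linarith), B_sq ha]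
  ring

lemma one_lt_A (ha : 1 / 2 < a) (s : ℝ) : 1 < A a s :=
  Real.lt_sqrt_of_sq_lt (by linarith [le_mul_cosh (a := a) (by linarith) (2 * s)])

lemma mul_sinh_two_mul_sq (ha : 1 / 2 ≤ a) (s : ℝ) :
    (a * Real.sinh (2 * s)) ^ 2 = A a s ^ 2 * B a s ^ 2 - K a ^ 2 := by
  rw [A_sq (by linarith), B_sq ha, K_sq ha, mul_pow, Real.sinh_sq]
  ring

lemma hasDerivAt_B (ha : 1 / 2 < a) (s : ℝ) :
    HasDerivAt (B a) (a * Real.sinh (2 * s) / B a s) s := by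
  have hpos : 0 < a * Real.cosh (2 * s) - 1 / 2 := by
    linarith [le_mul_cosh (a := a) (by linarith) (2 * s)]
  have hcosh := (((hasDerivAt_id' s).const_mul 2).cosh.const_mul a).sub_const (1 / 2)
  refine (hcosh.sqrt hpos.ne').congr_deriv ?_
  rw [B]
  ring

/-- The free boundary condition at parameter `s`, for an arbitrary angle `θ` in place of `φ a s`.
At `s = 0` the division by zero reduces it to `θ = 0`. -/
def FreeBoundary (a s θ : ℝ) : Prop :=
  Real.tanh θ = B a s * K a / (a * Real.sinh (2 * s))

namespace FreeBoundary

lemma A_mul_cosh_sq_mul_sub (h : FreeBoundary a s θ) (ha : 1 / 2 ≤ a) (hs : s ≠ 0) :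
    (A a s * Real.cosh θ) ^ 2 * (B a s ^ 2 - K a ^ 2) = (a * Real.sinh (2 * s)) ^ 2 := by
  have hq : a * Real.sinh (2 * s) ≠ 0 := mul_sinh_two_mul_ne_zero (by linarith) hs
  have hdiff : (a * Real.sinh (2 * s)) ^ 2 - (B a s * K a) ^ 2 =
      A a s ^ 2 * (B a s ^ 2 - K a ^ 2) := by
    rw [mul_sinh_two_mul_sq ha, A_sq_eq_B_sq_add_one ha]
    ring
  rw [← cosh_sq_mul_sq_sub_sq_of_tanh_eq_div hq h, hdiff]
  ring

lemma K_sq_lt_B_sq (h : FreeBoundary a s θ) (ha : 1 / 2 ≤ a) (hs : s ≠ 0) :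
    K a ^ 2 < B a s ^ 2 := by
  have hq : a * Real.sinh (2 * s) ≠ 0 := mul_sinh_two_mul_ne_zero (by linarith) hs
  have hprod := h.A_mul_cosh_sq_mul_sub ha hs
  exact sub_pos.mp (pos_of_mul_pos_right (hprod ▸ sq_pos_of_ne_zero hq) (sq_nonneg _))

lemma cosh_sq (h : FreeBoundary a s θ) (ha : 1 / 2 ≤ a) (hs : s ≠ 0)
    (hr : Real.cosh r = A a s * Real.cosh θ) :
    Real.cosh r ^ 2 = (a * Real.sinh (2 * s)) ^ 2 / (B a s ^ 2 - K a ^ 2) := by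
  rw [hr, eq_div_iff (sub_pos.mpr (h.K_sq_lt_B_sq ha hs)).ne', h.A_mul_cosh_sq_mul_sub ha hs]

lemma sinh_sq (h : FreeBoundary a s θ) (ha : 1 / 2 ≤ a) (hs : s ≠ 0)
    (hr : Real.cosh r = A a s * Real.cosh θ) :
    Real.sinh r ^ 2 = B a s ^ 4 / (B a s ^ 2 - K a ^ 2) := by
  have hBK : B a s ^ 2 - K a ^ 2 ≠ 0 := (sub_pos.mpr (h.K_sq_lt_B_sq ha hs)).ne'
  rw [Real.sinh_sq, h.cosh_sq ha hs hr, div_sub_one hBK, mul_sinh_two_mul_sq ha,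
    A_sq_eq_B_sq_add_one ha]
  congr 1
  ring

lemma cosh_div_sinh (h : FreeBoundary a s θ) (ha : 1 / 2 ≤ a) (hs : 0 < s) (hr₀ : 0 ≤ r)
    (hr : Real.cosh r = A a s * Real.cosh θ) :
    Real.cosh r / Real.sinh r = a * Real.sinh (2 * s) / B a s ^ 2 := by
  have hcosh : 0 ≤ Real.cosh r := (Real.cosh_pos r).le
  have hsinh : 0 ≤ Real.sinh r := Real.sinh_nonneg_iff.mpr hr₀
  have hsinh_two : 0 ≤ a * Real.sinh (2 * s) :=
    mul_nonneg (by linarith) (Real.sinh_nonneg_iff.mpr (by linarith))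
  have hBK : B a s ^ 2 - K a ^ 2 ≠ 0 := (sub_pos.mpr (h.K_sq_lt_B_sq ha hs.ne')).ne'
  refine (sq_eq_sq₀ (div_nonneg hcosh hsinh) (div_nonneg hsinh_two (sq_nonneg _))).mp ?_
  rw [div_pow, div_pow, h.cosh_sq ha hs.ne' hr, h.sinh_sq ha hs.ne' hr,
    div_div_div_cancel_right₀ hBK, ← pow_mul]

end FreeBoundary

/-- Geometric boundary identities: if `s₀ > 0` satisfies the free boundary
condition, then `B(s₀)² > K²`, `r := arcosh(A(s₀)·cosh(φ(s₀))) > 0`,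
`sinh(r)² = B(s₀)⁴/(B(s₀)² − K²)` and
`coth(r) = a·sinh(2s₀)/B(s₀)² = B'(s₀)/B(s₀)`. -/
theorem boundary_coth_identity (a : ℝ) (ha : 1 / 2 < a) (s₀ : ℝ) (hs₀ : 0 < s₀)
    (hFBC : Real.tanh (φ a s₀) = B a s₀ * K a / (a * Real.sinh (2 * s₀)))
    (r : ℝ) (hr : r = arcosh (A a s₀ * Real.cosh (φ a s₀))) :
    B a s₀ ^ 2 > K a ^ 2 ∧
    0 < r ∧
    Real.sinh r ^ 2 = B a s₀ ^ 4 / (B a s₀ ^ 2 - K a ^ 2) ∧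
    Real.cosh r / Real.sinh r = a * Real.sinh (2 * s₀) / B a s₀ ^ 2 ∧
    a * Real.sinh (2 * s₀) / B a s₀ ^ 2 = deriv (B a) s₀ / B a s₀ := by
  have hFB : FreeBoundary a s₀ (φ a s₀) := hFBC
  have hcosh_gt : 1 < A a s₀ * Real.cosh (φ a s₀) :=
    one_lt_mul_of_lt_of_le (one_lt_A ha s₀) (Real.one_le_cosh _)
  have hr_pos : 0 < r := hr ▸ arcosh_pos hcosh_gt
  have hr_cosh : Real.cosh r = A a s₀ * Real.cosh (φ a s₀) := by rw [hr, cosh_arcosh hcosh_gt.le]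
  refine ⟨hFB.K_sq_lt_B_sq ha.le hs₀.ne', hr_pos, hFB.sinh_sq ha.le hs₀.ne' hr_cosh,
    hFB.cosh_div_sinh ha.le hs₀ hr_pos.le hr_cosh, ?_⟩
  rw [(hasDerivAt_B ha s₀).deriv, div_div, sq]

end MoriCatenoid
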